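/- Let C be a symmetric monoidal category that is preadditive and k-linear with k-bilinear tensor product of morphisms, where k is a field of characteristic zero. Suppose C is connected, i.e. the only idempotent endomorphisms of the monoidal unit 𝟙 are 0 and the identity. Then every invertible object x of C (one for which there exists an object y with x ⊗ y ≅ 𝟙) satisfies: the self-braiding β_{x,x} : x ⊗ x → x ⊗ x equals the identity, or β_{x,x} equals minus the identity, and not both unless x ⊗ x ≅ 0. (In the paper's formulation: of Λ²(x) and S²(x), one is zero and the other is isomorphic to x^{⊗2}.) -/

import Mathlib

/-!
STATEMENT 0: In a connected `k`-linear symmetric monoidal category (`k` of characteristic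
zero, tensor `k`-bilinear), every invertible object `x` has self-braiding equal to the
identity or to minus the identity, and not both unless `x ⊗ x` is a zero object.
-/

open CategoryTheory Limits MonoidalCategory

namespace CategoryTheory

/-- Whiskering with an object that has a right inverse up to isomorphism is faithful. -/
theorem whiskerRight_injective_of_tensor_iso_unit {C : Type*} [Category C] [MonoidalCategory C]
    {w z : C} (i : w ⊗ z ≅ 𝟙_ C) {a b : C} {f g : a ⟶ b} (h : f ▷ w = g ▷ w) : f = g := by
  have h_tensor : f ▷ (w ⊗ z) = g ▷ (w ⊗ z) := by
    rw [whiskerRight_tensor, whiskerRight_tensor, h]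
  have h_unit : f ▷ 𝟙_ C = g ▷ 𝟙_ C := by
    rw [← cancel_epi (a ◁ i.hom), whisker_exchange, whisker_exchange, h_tensor]
  simpa using h_unit

/-- If the only idempotents of the unit are `0` and `𝟙`, the same holds for any object with an
inverse for the tensor product. -/
theorem idempotent_eq_zero_or_id_of_tensor_iso_unit {C : Type*} [Category C] [MonoidalCategory C]
    [BraidedCategory C] [Preadditive C] [MonoidalPreadditive C]
    (hconn : ∀ e : 𝟙_ C ⟶ 𝟙_ C, e ≫ e = e → e = 0 ∨ e = 𝟙 (𝟙_ C))
    {z w : C} (i : z ⊗ w ≅ 𝟙_ C) (e : z ⟶ z) (he : e ≫ e = e) : e = 0 ∨ e = 𝟙 z := by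
  have h_idem : (i.inv ≫ e ▷ w ≫ i.hom) ≫ (i.inv ≫ e ▷ w ≫ i.hom) = i.inv ≫ e ▷ w ≫ i.hom := by
    simp only [Category.assoc, Iso.hom_inv_id_assoc, ← comp_whiskerRight_assoc, he]
  refine (hconn _ h_idem).imp (fun h => ?_) (fun h => ?_) <;>
    refine whiskerRight_injective_of_tensor_iso_unit (β_ w z ≪≫ i) ?_ <;>
    rw [← cancel_mono i.hom, ← cancel_epi i.inv, h] <;> simp

/-- The tensor square of an invertible object is invertible. -/
def tensorSquareIsoUnit {C : Type*} [Category C] [MonoidalCategory C] {x y : C}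
    (i : x ⊗ y ≅ 𝟙_ C) : (x ⊗ x) ⊗ (y ⊗ y) ≅ 𝟙_ C :=
  α_ x x (y ⊗ y) ≪≫ whiskerLeftIso x ((α_ x y y).symm ≪≫ whiskerRightIso i y ≪≫ λ_ y) ≪≫ i

end CategoryTheory

theorem line_object_bosonic_or_fermionic
    (k : Type*) [Field k] [CharZero k]
    {C : Type*} [Category C] [MonoidalCategory C] [SymmetricCategory C]
    [Preadditive C] [CategoryTheory.Linear k C]
    [MonoidalPreadditive C] [MonoidalLinear k C]
    (hconn : ∀ e : 𝟙_ C ⟶ 𝟙_ C, e ≫ e = e → e = 0 ∨ e = 𝟙 (𝟙_ C))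
    (x : C) (hx : ∃ y : C, Nonempty (x ⊗ y ≅ 𝟙_ C)) :
    ((β_ x x).hom = 𝟙 (x ⊗ x) ∨ (β_ x x).hom = -𝟙 (x ⊗ x)) ∧
      (((β_ x x).hom = 𝟙 (x ⊗ x) ∧ (β_ x x).hom = -𝟙 (x ⊗ x)) → IsZero (x ⊗ x)) := by
  have h_two : (2 : k) ≠ 0 := two_ne_zero
  obtain ⟨y, ⟨i⟩⟩ := hx
  refine ⟨?_, fun ⟨h_id, h_neg⟩ => ?_⟩
  · have h_sq : (β_ x x).hom ≫ (β_ x x).hom = 𝟙 (x ⊗ x) := SymmetricCategory.symmetry x x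
    have h_idem : ((2 : k)⁻¹ • (𝟙 (x ⊗ x) + (β_ x x).hom)) ≫
        ((2 : k)⁻¹ • (𝟙 (x ⊗ x) + (β_ x x).hom)) = (2 : k)⁻¹ • (𝟙 (x ⊗ x) + (β_ x x).hom) := by
      simp only [Linear.smul_comp, Linear.comp_smul, Preadditive.add_comp, Preadditive.comp_add,
        Category.id_comp, Category.comp_id, h_sq]
      module
    rcases idempotent_eq_zero_or_id_of_tensor_iso_unit hconn (tensorSquareIsoUnit i) _ h_idem
      with h | h
    · right
      rw [smul_eq_zero_iff_right (inv_ne_zero h_two)] at h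
      exact eq_neg_of_add_eq_zero_right h
    · left
      rw [inv_smul_eq_iff₀ h_two, two_smul] at h
      exact add_left_cancel h
  · rw [IsZero.iff_id_eq_zero, ← smul_eq_zero_iff_right h_two, two_smul]
    exact eq_neg_iff_add_eq_zero.mp (h_id.symm.trans h_neg)
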